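/- Let s_{m,n} = |NC(S_{m,n})|, and in the ring of formal power series ℤ⟦X, Y⟧ let S(X,Y) = Σ_{m,n ≥ 0} s_{m,n} X^m Y^n and let C(Y) = Σ_{n ≥ 0} C_n Y^n be the generating function of the Catalan numbers. Then Y^2 · (1 − X·(1 + C(Y))) · S(X,Y) = C(Y) − 1 − Y. -/

import Mathlib

open Finset

/-- A finpartition of a finite set of points in the plane is *noncrossing* if the
convex hulls (over `ℝ`) of its blocks are pairwise disjoint. -/
def IsNoncrossing {P : Finset ℂ} (π : Finpartition P) : Prop :=
  (π.parts : Set (Finset ℂ)).Pairwise fun B₁ B₂ =>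
    Disjoint (convexHull ℝ (B₁ : Set ℂ)) (convexHull ℝ (B₂ : Set ℂ))

/-- The poset `NC(P)` of noncrossing partitions of `P`, ordered by refinement:
`π ≤ μ` iff every block of `μ` is a union of blocks of `π`. -/
abbrev NC (P : Finset ℂ) : Type := {π : Finpartition P // IsNoncrossing π}

/-- The blocks of a noncrossing partition. -/
def NC.parts {P : Finset ℂ} (π : NC P) : Finset (Finset ℂ) := π.1.parts

/-- Two points lie in a common block of a noncrossing partition. -/
def NC.SameBlock {P : Finset ℂ} (π : NC P) (a b : ℂ) : Prop :=
  ∃ B ∈ π.parts, a ∈ B ∧ b ∈ B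

/-- The real point `x_k = -1 + 2k/(m+1)` of the semicircular configuration `S_{m,n}`. -/
noncomputable def Sx (m k : ℕ) : ℂ := -1 + 2 * (k : ℂ) / ((m : ℂ) + 1)

/-- The circle point `y_j = exp(iπj/(n+1))` of the semicircular configuration `S_{m,n}`. -/
noncomputable def Sy (n j : ℕ) : ℂ :=
  Complex.exp ((Real.pi : ℂ) * (j : ℂ) / ((n : ℂ) + 1) * Complex.I)

/-- The semicircular configuration `S_{m,n}`: the `m+2` real points
`x_k = -1 + 2k/(m+1)` for `k = 0, …, m+1` (including the endpoints `±1`) together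
with the `n` points `y_j = exp(iπj/(n+1))` for `j = 1, …, n` on the open upper
unit semicircle. -/
noncomputable def Sconfig (m n : ℕ) : Finset ℂ :=
  ((Finset.range (m + 2)).image fun k : ℕ => Sx m k) ∪
    ((Finset.Icc 1 n).image fun j : ℕ => Sy n j)

/-- The bivariate generating function `S(X,Y) = Σ s_{m,n} X^m Y^n` in `ℤ⟦X,Y⟧`, where
`s_{m,n} = |NC(S_{m,n})|`, the variable `X` is `MvPowerSeries.X 0` and `Y` is
`MvPowerSeries.X 1`. -/
noncomputable def Sseries : MvPowerSeries (Fin 2) ℤ :=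
  fun d => (Nat.card (NC (Sconfig (d 0) (d 1))) : ℤ)

/-- The Catalan generating function `C(Y) = Σ C_n Y^n`, viewed in `ℤ⟦X,Y⟧` as a power
series in the variable `Y = MvPowerSeries.X 1` alone. -/
noncomputable def Cseries : MvPowerSeries (Fin 2) ℤ :=
  fun d => if d 0 = 0 then (catalan (d 1) : ℤ) else 0

/-!
List the points of `S_{m,n}` counterclockwise from `-1`, so that the `k = m + 2` collinear points
come first, and encode a partition by the function sending each index to the least index of its
block. Noncrossing partitions then become labellings: chords may not cross, and a block meets the
first `k` indices in an interval.

Let `F_k(Y)` count the labellings of `k` collinear and `n` further points, so that `F_0 = C`.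
Removing everything up to the last index `v` in the block of `0` gives
`F_{k+1} = ∑_{v ≤ k} F_v + Y C F_{k+1}`: for `v` on the segment the removed part is a single block,
and otherwise `v` can be detached from its block. Since `C = 1 + Y C²`, this reads
`F_{k+1} = C ∑_{v ≤ k} F_v`, hence `F_{k+2} = (1 + C) F_{k+1}`. So `S` is a geometric series in
`X (1 + C)` with first term `F_2 = C² (1 + C)`, and `Y² F_2 = C - 1 - Y`.
-/

/-! ### Counting labellings -/

/-- `f : ℕ → ℕ` encodes a partition of `{0, …, N - 1}` by sending every index to the least element
of its block. The partition is noncrossing by `nested`, and by `interval` each block meets the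
first `k` indices, which stand for collinear points, in an interval. Indices from `N` on are
fixed, so that `f` is determined by the partition. -/
structure IsLabelling (k N : ℕ) (f : ℕ → ℕ) : Prop where
  le_self : ∀ a, f a ≤ a
  eq_self : ∀ a, N ≤ a → f a = a
  nested : ∀ b c, f c ≤ b → b ≤ c → f c ≤ f b
  interval : ∀ b c, c < k → f c ≤ b → b ≤ c → f b ≤ f c

lemma IsLabelling.apply_apply {k N : ℕ} {f : ℕ → ℕ} (hf : IsLabelling k N f) (a : ℕ) :
    f (f a) = f a :=
  (hf.le_self _).antisymm (hf.nested _ a le_rfl (hf.le_self a))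

lemma finite_setOf_isLabelling (k N : ℕ) : {f | IsLabelling k N f}.Finite := by
  refine Set.Finite.of_finite_image (f := fun f (i : Fin N) => f i) ?_ fun f hf g hg hfg => ?_
  · refine (Set.Finite.pi' fun i : Fin N => Set.finite_Iic (i : ℕ)).subset ?_
    rintro _ ⟨f, hf, rfl⟩ i
    exact hf.le_self i
  · funext a
    obtain haN | haN := lt_or_ge a N
    · exact congrFun hfg ⟨a, haN⟩
    · rw [hf.eq_self a haN, hg.eq_self a haN]

/-- The finite set of all labellings with parameters `k` and `N`. -/
noncomputable def labellings (k N : ℕ) : Finset (ℕ → ℕ) :=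
  (finite_setOf_isLabelling k N).toFinset

lemma mem_labellings {k N : ℕ} {f : ℕ → ℕ} : f ∈ labellings k N ↔ IsLabelling k N f := by
  simp [labellings]

/-- Labellings of `{0, …, v}` in which `0` and `v` share a block. -/
noncomputable def closedLabellings (k v : ℕ) : Finset (ℕ → ℕ) :=
  {f ∈ labellings k (v + 1) | f v = 0}

lemma mem_closedLabellings {k v : ℕ} {f : ℕ → ℕ} :
    f ∈ closedLabellings k v ↔ IsLabelling k (v + 1) f ∧ f v = 0 := by
  simp [closedLabellings, mem_labellings]

/-- The last index in the block of `0`, among `{0, …, N}`. -/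
def lastZero (N : ℕ) (f : ℕ → ℕ) : ℕ := Nat.findGreatest (f · = 0) N

lemma lastZero_le (N : ℕ) (f : ℕ → ℕ) : lastZero N f ≤ N := Nat.findGreatest_le N

lemma IsLabelling.lastZero_eq_iff {k N v : ℕ} {f : ℕ → ℕ} (hf : IsLabelling k (N + 1) f)
    (hv : v ≤ N) : lastZero N f = v ↔ f v = 0 ∧ ∀ a, v < a → v < f a := by
  have h0 : f 0 = 0 := Nat.le_zero.1 (hf.le_self 0)
  rw [lastZero, Nat.findGreatest_eq_iff]
  constructor
  · rintro ⟨-, hzero, hlast⟩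
    have hv0 : f v = 0 := by
      by_cases h : v = 0
      · rw [h, h0]
      · exact hzero h
    refine ⟨hv0, fun a hva => ?_⟩
    by_contra! hle
    have hnest := hf.nested v a hle hva.le
    by_cases haN : a ≤ N
    · exact hlast hva haN (by omega)
    · have := hf.eq_self a (by omega)
      omega
  · rintro ⟨hv0, hlast⟩
    exact ⟨hv, fun _ => hv0, fun a hva _ ha => by have := hlast a hva; omega⟩

/-- The labelling of the ordinal sum of two partitions, the first one of `{0, …, v - 1}`. -/
def appendLabelling (v : ℕ) (g h : ℕ → ℕ) : ℕ → ℕ :=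
  fun a => if a < v then g a else h (a - v) + v

/-- The restriction of a labelling to `{0, …, v - 1}`. -/
def takeLabelling (v : ℕ) (f : ℕ → ℕ) : ℕ → ℕ := fun a => if a < v then f a else a

/-- The restriction of a labelling to the indices from `v` on, shifted down by `v`. -/
def dropLabelling (v : ℕ) (f : ℕ → ℕ) : ℕ → ℕ := fun a => f (a + v) - v

section Split

variable {k v w : ℕ} {f g h : ℕ → ℕ}

lemma IsLabelling.append (hg : IsLabelling k v g) (hh : IsLabelling (k - v) w h) :
    IsLabelling k (v + w) (appendLabelling v g h) where
  le_self a := by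
    have := hg.le_self a
    have := hh.le_self (a - v)
    grind [appendLabelling]
  eq_self a ha := by
    have := hh.eq_self (a - v)
    grind [appendLabelling]
  nested b c := by
    have := hg.nested b c
    have := hh.nested (b - v) (c - v)
    have := hg.le_self c
    grind [appendLabelling]
  interval b c := by
    have := hg.interval b c
    have := hh.interval (b - v) (c - v)
    have := hg.le_self b
    grind [appendLabelling]

lemma IsLabelling.take (hf : IsLabelling k (v + w) f) : IsLabelling k v (takeLabelling v f) where
  le_self a := by
    have := hf.le_self a
    grind [takeLabelling]
  eq_self a ha := by grind [takeLabelling]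
  nested b c := by
    have := hf.nested b c
    grind [takeLabelling]
  interval b c := by
    have := hf.interval b c
    grind [takeLabelling]

lemma IsLabelling.drop (hf : IsLabelling k (v + w) f) (hv : ∀ a, v ≤ a → v ≤ f a) :
    IsLabelling (k - v) w (dropLabelling v f) where
  le_self a := by
    have := hf.le_self (a + v)
    grind [dropLabelling]
  eq_self a ha := by
    have := hf.eq_self (a + v)
    grind [dropLabelling]
  nested b c := by
    have := hf.nested (b + v) (c + v)
    have := hv (c + v)
    grind [dropLabelling]
  interval b c := by
    have := hf.interval (b + v) (c + v)
    have := hv (c + v)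
    grind [dropLabelling]

lemma appendLabelling_take_drop (hv : ∀ a, v ≤ a → v ≤ f a) :
    appendLabelling v (takeLabelling v f) (dropLabelling v f) = f := by
  funext a
  have := hv a
  grind [appendLabelling, takeLabelling, dropLabelling]

lemma takeLabelling_append (hg : IsLabelling k v g) :
    takeLabelling v (appendLabelling v g h) = g := by
  funext a
  have := hg.eq_self a
  grind [appendLabelling, takeLabelling]

lemma dropLabelling_append : dropLabelling v (appendLabelling v g h) = h := by
  funext a
  simp [appendLabelling, dropLabelling]

end Split

lemma card_labellings_lastZero {k N v : ℕ} (hv : v ≤ N) :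
    #{f ∈ labellings k (N + 1) | lastZero N f = v} =
      #(closedLabellings k v) * #(labellings (k - (v + 1)) (N - v)) := by
  have hN : N + 1 = v + 1 + (N - v) := by omega
  rw [← card_product]
  refine card_nbij' (fun f => (takeLabelling (v + 1) f, dropLabelling (v + 1) f))
    (fun p => appendLabelling (v + 1) p.1 p.2) (fun f hf => ?_) (fun p hp => ?_) (fun f hf => ?_)
    (fun p hp => ?_)
  · simp only [coe_filter, Set.mem_ofPred_eq, mem_labellings] at hf
    obtain ⟨hf, hlast⟩ := hf
    rw [hf.lastZero_eq_iff hv] at hlast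
    rw [hN] at hf
    simp only [mem_coe, mem_product, mem_closedLabellings, mem_labellings]
    exact ⟨⟨hf.take, by simp [takeLabelling, hlast.1]⟩, hf.drop hlast.2⟩
  · simp only [mem_coe, mem_product, mem_closedLabellings, mem_labellings] at hp
    obtain ⟨⟨hg, hg0⟩, hh⟩ := hp
    have hf := hg.append hh
    rw [← hN] at hf
    simp only [coe_filter, Set.mem_ofPred_eq, mem_labellings]
    refine ⟨hf, (hf.lastZero_eq_iff hv).2 ⟨by simp [appendLabelling, hg0], fun a ha => ?_⟩⟩
    grind [appendLabelling]
  · simp only [coe_filter, Set.mem_ofPred_eq, mem_labellings] at hf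
    exact appendLabelling_take_drop ((hf.1.lastZero_eq_iff hv).1 hf.2).2
  · simp only [mem_coe, mem_product, mem_closedLabellings] at hp
    exact Prod.ext (takeLabelling_append hp.1.1) dropLabelling_append

lemma card_labellings_succ (k N : ℕ) :
    #(labellings k (N + 1)) = ∑ v ∈ range (N + 1),
      #(closedLabellings k v) * #(labellings (k - (v + 1)) (N - v)) := by
  rw [card_eq_sum_card_fiberwise (f := lastZero N) (t := range (N + 1))
    fun f _ => by simpa [Nat.lt_succ_iff] using lastZero_le N f]
  exact sum_congr rfl fun v hv => card_labellings_lastZero (Nat.lt_succ_iff.1 (mem_range.1 hv))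

lemma card_closedLabellings_of_lt {k v : ℕ} (hv : v < k) : #(closedLabellings k v) = 1 := by
  refine card_eq_one.2 ⟨fun a => if a ≤ v then 0 else a, ?_⟩
  ext f
  rw [mem_closedLabellings, mem_singleton]
  constructor
  · rintro ⟨hf, hv0⟩
    funext a
    have := hf.interval a v hv
    have := hf.eq_self a
    grind
  · rintro rfl
    exact ⟨⟨by grind, by grind, by grind, by grind⟩, by simp⟩

lemma card_closedLabellings_of_le {k v : ℕ} (hk : k ≤ v) :
    #(closedLabellings k v) = #(labellings k v) := by
  -- Isolating `v` from the block of `0` is reversible, as `v` is the last index and lies outside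
  -- the range of `interval`.
  refine card_nbij' (Function.update · v v) (Function.update · v 0) (fun f hf => ?_)
    (fun f hf => ?_) (fun f hf => ?_) (fun f hf => ?_)
  · obtain ⟨hf, -⟩ := mem_closedLabellings.1 hf
    refine mem_labellings.2 ⟨fun a => ?_, fun a ha => ?_, fun b c => ?_, fun b c => ?_⟩
    · have := hf.le_self a
      grind
    · have := hf.eq_self a
      grind
    · have := hf.nested b c
      have := hf.eq_self c
      grind
    · have := hf.interval b c
      grind
  · have hf := mem_labellings.1 hf
    refine mem_closedLabellings.2 ⟨⟨fun a => ?_, fun a ha => ?_, fun b c => ?_, fun b c => ?_⟩, ?_⟩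
    · have := hf.le_self a
      grind
    · have := hf.eq_self a
      grind
    · have := hf.nested b c
      have := hf.eq_self c
      grind
    · have := hf.interval b c
      grind
    · simp
  · obtain ⟨-, hv0⟩ := mem_closedLabellings.1 hf
    exact (Function.update_idem ..).trans (Function.update_eq_self_iff.2 hv0.symm)
  · have hf := mem_labellings.1 hf
    exact (Function.update_idem ..).trans (Function.update_eq_self_iff.2 (hf.eq_self v le_rfl).symm)

lemma card_labellings_zero_right (k : ℕ) : #(labellings k 0) = 1 := by
  refine card_eq_one.2 ⟨id, ?_⟩
  ext f
  rw [mem_labellings, mem_singleton]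
  constructor
  · exact fun hf => funext fun a => hf.eq_self a (Nat.zero_le a)
  · rintro rfl
    exact ⟨fun _ => le_rfl, fun _ _ => rfl, fun _ _ h _ => h, fun _ _ _ _ h => h⟩

lemma card_labellings_zero_left (N : ℕ) : #(labellings 0 N) = catalan N := by
  induction N using Nat.strong_induction_on with
  | _ N ih =>
    obtain _ | N := N
    · simp [card_labellings_zero_right]
    · rw [card_labellings_succ, catalan_succ, sum_range]
      refine sum_congr rfl fun v _ => ?_
      rw [card_closedLabellings_of_le (Nat.zero_le _), Nat.zero_sub, ih v (by omega),
        ih (N - v) (by omega)]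

lemma card_labellings_add {k n : ℕ} (hkn : k + n ≠ 0) :
    #(labellings k (k + n)) = ∑ v ∈ range k, #(labellings v (v + n)) +
      ∑ i ∈ range n, #(labellings k (k + i)) * catalan (n - 1 - i) := by
  obtain ⟨N, hN⟩ := Nat.exists_eq_succ_of_ne_zero hkn
  rw [hN, card_labellings_succ, ← Nat.succ_eq_add_one, ← hN, sum_range_add]
  congr 1
  -- If the block of `0` ends at `v < k`, it is `{0, …, v}` and `k - 1 - v` collinear points remain.
  · rw [← sum_range_reflect]
    refine sum_congr rfl fun v hv => ?_
    have hv := mem_range.1 hv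
    rw [card_closedLabellings_of_lt (by omega), one_mul, show k - (k - 1 - v + 1) = v by omega,
      show N - (k - 1 - v) = v + n by omega]
  · refine sum_congr rfl fun i hi => ?_
    have hi := mem_range.1 hi
    rw [card_closedLabellings_of_le (by omega), show k - (k + i + 1) = 0 by omega,
      show N - (k + i) = n - 1 - i by omega, card_labellings_zero_left]

/-! ### Generating functions -/

section Series

open PowerSeries

/-- The Catalan generating function over `ℤ`, in one variable. -/
noncomputable def intCatalanSeries : ℤ⟦X⟧ := catalanSeries.map (Nat.castRingHom ℤ)

lemma intCatalanSeries_sq_mul_X_add_one :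
    intCatalanSeries ^ 2 * X + 1 = intCatalanSeries := by
  simpa [intCatalanSeries] using
    congrArg (PowerSeries.map (Nat.castRingHom ℤ)) catalanSeries_sq_mul_X_add_one

lemma coeff_intCatalanSeries (n : ℕ) : coeff n intCatalanSeries = catalan n := by
  simp [intCatalanSeries]

/-- The series `∑ n, #(labellings k (k + n)) * X ^ n`. -/
noncomputable def labellingSeries (k : ℕ) : ℤ⟦X⟧ := mk fun n => #(labellings k (k + n))

lemma coeff_labellingSeries (k n : ℕ) :
    coeff n (labellingSeries k) = #(labellings k (k + n)) :=
  coeff_mk n _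

lemma labellingSeries_zero : labellingSeries 0 = intCatalanSeries := by
  ext n
  rw [coeff_labellingSeries, coeff_intCatalanSeries, Nat.zero_add, card_labellings_zero_left]

lemma labellingSeries_eq_sum_add {k : ℕ} (hk : k ≠ 0) :
    labellingSeries k =
      ∑ v ∈ range k, labellingSeries v + X * (labellingSeries k * intCatalanSeries) := by
  ext n
  rw [map_add, map_sum, coeff_labellingSeries, card_labellings_add (by omega)]
  simp only [coeff_labellingSeries, Nat.cast_add, Nat.cast_sum, Nat.cast_mul]
  congr 1
  obtain _ | n := n
  · simp
  · rw [coeff_succ_X_mul, coeff_mul, Nat.sum_antidiagonal_eq_sum_range_succ_mk]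
    simp [coeff_labellingSeries, coeff_intCatalanSeries]

lemma labellingSeries_succ (k : ℕ) :
    labellingSeries (k + 1) = intCatalanSeries * ∑ v ∈ range (k + 1), labellingSeries v := by
  linear_combination intCatalanSeries * labellingSeries_eq_sum_add k.succ_ne_zero +
    labellingSeries (k + 1) * intCatalanSeries_sq_mul_X_add_one

lemma labellingSeries_add_two (k : ℕ) :
    labellingSeries (k + 2) = (1 + intCatalanSeries) * labellingSeries (k + 1) := by
  rw [labellingSeries_succ (k + 1), sum_range_succ, mul_add, ← labellingSeries_succ, add_mul,
    one_mul]

lemma X_sq_mul_labellingSeries_two :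
    X ^ 2 * labellingSeries 2 = intCatalanSeries - 1 - X := by
  have hone := labellingSeries_succ 0
  rw [sum_range_one, labellingSeries_zero] at hone
  rw [labellingSeries_add_two 0, hone]
  linear_combination (1 + X * (1 + intCatalanSeries)) * intCatalanSeries_sq_mul_X_add_one

section Flatten

variable {R : Type*} [CommSemiring R]

/-- The function underlying `flatten`. -/
noncomputable def flattenFun (F : R⟦X⟧⟦X⟧) : MvPowerSeries (Fin 2) R :=
  fun d => coeff (d 1) (coeff (d 0) F)

lemma coeff_flattenFun (F : R⟦X⟧⟦X⟧) (d : Fin 2 →₀ ℕ) :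
    MvPowerSeries.coeff d (flattenFun F) = coeff (d 1) (coeff (d 0) F) := rfl

lemma flattenFun_mul (F G : R⟦X⟧⟦X⟧) : flattenFun (F * G) = flattenFun F * flattenFun G := by
  ext d
  simp only [coeff_flattenFun, MvPowerSeries.coeff_mul, coeff_mul, map_sum]
  rw [← sum_product']
  refine sum_nbij'
    (fun p => (.single 0 p.1.1 + .single 1 p.2.1, .single 0 p.1.2 + .single 1 p.2.2))
    (fun q => ((q.1 0, q.2 0), (q.1 1, q.2 1))) ?_ ?_ ?_ ?_ ?_ <;>
  simp [Finsupp.ext_iff, Fin.forall_fin_two, Prod.ext_iff]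

lemma flattenFun_one : flattenFun (1 : R⟦X⟧⟦X⟧) = 1 := by
  ext d
  rw [coeff_flattenFun, coeff_one, MvPowerSeries.coeff_one]
  split_ifs <;> simp_all [Finsupp.ext_iff, Fin.forall_fin_two, coeff_one]

/-- A power series in `X` whose coefficients are power series in `Y`, read as a power series in
the two variables `X = MvPowerSeries.X 0` and `Y = MvPowerSeries.X 1`. -/
noncomputable def flatten : R⟦X⟧⟦X⟧ →+* MvPowerSeries (Fin 2) R where
  toFun := flattenFun
  map_zero' := by ext; simp [coeff_flattenFun]
  map_one' := flattenFun_one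
  map_add' F G := by ext; simp [coeff_flattenFun]
  map_mul' := flattenFun_mul

lemma coeff_flatten (F : R⟦X⟧⟦X⟧) (d : Fin 2 →₀ ℕ) :
    MvPowerSeries.coeff d (flatten F) = coeff (d 1) (coeff (d 0) F) :=
  coeff_flattenFun F d

lemma flatten_X : flatten (X : R⟦X⟧⟦X⟧) = MvPowerSeries.X 0 := by
  ext d
  rw [coeff_flatten, coeff_X, MvPowerSeries.coeff_X]
  split_ifs <;> simp_all [Finsupp.ext_iff, Fin.forall_fin_two, coeff_one]

lemma flatten_C_X : flatten (C (X : R⟦X⟧)) = MvPowerSeries.X 1 := by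
  ext d
  rw [coeff_flatten, coeff_C, MvPowerSeries.coeff_X]
  split_ifs <;> simp_all [Finsupp.ext_iff, Fin.forall_fin_two, coeff_X]

end Flatten

lemma flatten_C_intCatalanSeries : flatten (C intCatalanSeries) = Cseries := by
  ext d
  rw [coeff_flatten, coeff_C, MvPowerSeries.coeff_apply, Cseries]
  split_ifs
  · exact coeff_intCatalanSeries (d 1)
  · exact map_zero _

lemma one_sub_X_mul_mul_mk_labellingSeries :
    (1 - X * (1 + C intCatalanSeries)) * (PowerSeries.mk fun m => labellingSeries (m + 2)) =
      C (labellingSeries 2) := by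
  rw [sub_mul, one_mul, mul_assoc, add_mul, one_mul]
  ext1 m
  obtain _ | m := m
  · simp
  · simp [coeff_succ_X_mul, labellingSeries_add_two (m + 1), add_mul]

end Series

/-! ### Convex position with one flat edge -/

/-- Twice the signed area of the triangle `p q r`, positive iff it is counterclockwise. -/
def orient (p q r : ℂ) : ℝ := (q.re - p.re) * (r.im - p.im) - (q.im - p.im) * (r.re - p.re)

lemma orient_rotate (p q r : ℂ) : orient q r p = orient p q r := by
  simp only [orient]; ring

lemma orient_swap_right (p q r : ℂ) : orient p r q = -orient p q r := by
  simp only [orient]; ring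

lemma orient_self_left (p q : ℂ) : orient p p q = 0 := by
  simp [orient]

lemma orient_self_right (p q : ℂ) : orient p q q = 0 := by
  simp only [orient]; ring

lemma orient_add_I (p q : ℂ) : orient p (p + Complex.I) q = p.re - q.re := by
  simp [orient]

lemma orient_smul_add_smul {a b : ℝ} (hab : a + b = 1) (p q z w : ℂ) :
    orient p q (a • z + b • w) = a * orient p q z + b * orient p q w := by
  simp only [orient, Complex.add_re, Complex.add_im, Complex.smul_re, Complex.smul_im, smul_eq_mul]
  linear_combination ((q.re - p.re) * p.im - (q.im - p.im) * p.re) * hab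

lemma disjoint_convexHull_of_orient {A B : Set ℂ} (p q : ℂ) (hA : ∀ z ∈ A, orient p q z ≤ 0)
    (hB : ∀ z ∈ B, 0 < orient p q z) : Disjoint (convexHull ℝ A) (convexHull ℝ B) := by
  have hnonpos : Convex ℝ {z | orient p q z ≤ 0} := by
    intro z hz w hw a b ha hb hab
    rw [Set.mem_ofPred_eq, orient_smul_add_smul hab]
    exact convex_Iic (0 : ℝ) hz hw ha hb hab
  have hpos : Convex ℝ {z | 0 < orient p q z} := by
    intro z hz w hw a b ha hb hab
    rw [Set.mem_ofPred_eq, orient_smul_add_smul hab]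
    exact convex_Ioi (0 : ℝ) hz hw ha hb hab
  refine .mono (convexHull_min hA hnonpos) (convexHull_min hB hpos) ?_
  exact Set.disjoint_left.2 fun z (hz : orient p q z ≤ 0) hz' => not_lt_of_ge hz hz'

lemma exists_mem_segment_inter_of_orient {a b c d : ℂ} (hbcd : 0 ≤ orient b c d)
    (habd : 0 ≤ orient a b d) (habc : 0 ≤ orient a b c) (hacd : 0 < orient a c d) :
    ∃ z, z ∈ segment ℝ a c ∧ z ∈ segment ℝ b d := by
  have hsum : orient b c d + orient a b d = orient a c d + orient a b c := by
    simp only [orient]; ring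
  have hne : orient a c d + orient a b c ≠ 0 := by positivity
  refine ⟨(orient b c d / (orient a c d + orient a b c)) • a +
    (orient a b d / (orient a c d + orient a b c)) • c,
    ⟨_, _, by positivity, by positivity, ?_, rfl⟩,
    ⟨orient a c d / (orient a c d + orient a b c), orient a b c / (orient a c d + orient a b c),
      by positivity, by positivity, ?_, ?_⟩⟩
  · rw [← add_div, hsum, div_self hne]
  · rw [← add_div, div_self hne]
  · apply Complex.ext <;>
    · simp only [Complex.add_re, Complex.add_im, Complex.smul_re, Complex.smul_im, smul_eq_mul]
      field_simp
      simp only [orient]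
      ring

/-- The points `p 0, …, p (N - 1)` are the successive vertices of a counterclockwise convex
polygon, except that the first `k` of them lie on its bottom edge, which is part of the real
axis. -/
structure IsFlatConvex (k N : ℕ) (p : ℕ → ℂ) : Prop where
  two_le : 2 ≤ k
  im_eq_zero : ∀ i < k, (p i).im = 0
  re_lt : ∀ i j, i < j → j < k → (p i).re < (p j).re
  orient_pos : ∀ i j l, i < j → j < l → l < N → k ≤ l → 0 < orient (p i) (p j) (p l)

namespace IsFlatConvex

variable {k N : ℕ} {p : ℕ → ℂ}

lemma re_le (hp : IsFlatConvex k N p) {i j : ℕ} (hij : i ≤ j) (hj : j < k) :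
    (p i).re ≤ (p j).re := by
  obtain rfl | hij := hij.eq_or_lt
  · rfl
  · exact (hp.re_lt i j hij hj).le

lemma orient_nonneg (hp : IsFlatConvex k N p) {i j l : ℕ} (hij : i ≤ j) (hjl : j ≤ l)
    (hl : l < N) : 0 ≤ orient (p i) (p j) (p l) := by
  obtain rfl | hij := hij.eq_or_lt
  · rw [orient_self_left]
  obtain rfl | hjl := hjl.eq_or_lt
  · rw [orient_self_right]
  obtain hlk | hkl := lt_or_ge l k
  · simp [orient, hp.im_eq_zero i (by omega), hp.im_eq_zero j (by omega), hp.im_eq_zero l hlk]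
  · exact (hp.orient_pos i j l hij hjl hl hkl).le

lemma mem_segment (hp : IsFlatConvex k N p) {a b c : ℕ} (hab : a ≤ b) (hbc : b ≤ c) (hc : c < k) :
    p b ∈ segment ℝ (p a) (p c) := by
  have hreal : ∀ i < k, Complex.ofRealCLM (p i).re = p i := fun i hi =>
    Complex.ext rfl (hp.im_eq_zero i hi).symm
  have hmem : (p b).re ∈ segment ℝ (p a).re (p c).re := by
    rw [segment_eq_Icc (hp.re_le (hab.trans hbc) hc)]
    exact ⟨hp.re_le hab (by omega), hp.re_le hbc hc⟩
  have himage := Set.mem_image_of_mem Complex.ofRealCLM.toLinearMap.toAffineMap hmem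
  rw [image_segment] at himage
  simpa only [LinearMap.coe_toAffineMap, ContinuousLinearMap.coe_coe, hreal a (by omega),
    hreal b (by omega), hreal c hc] using himage

lemma exists_mem_segment_inter (hp : IsFlatConvex k N p) {a b c d : ℕ} (hab : a < b) (hbc : b < c)
    (hcd : c < d) (hd : d < N) :
    ∃ z, z ∈ segment ℝ (p a) (p c) ∧ z ∈ segment ℝ (p b) (p d) := by
  obtain hdk | hkd := lt_or_ge d k
  · exact ⟨p b, hp.mem_segment hab.le hbc.le (by omega), left_mem_segment ..⟩
  · exact exists_mem_segment_inter_of_orient (hp.orient_nonneg hbc.le hcd.le hd)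
      (hp.orient_nonneg hab.le (hbc.trans hcd).le hd)
      (hp.orient_nonneg hab.le hbc.le (hcd.trans hd))
      (hp.orient_pos a c d (hab.trans hbc) hcd hd hkd)

lemma injOn (hp : IsFlatConvex k N p) : Set.InjOn p (Set.Iio N) := by
  suffices hne : ∀ i j, i < j → j < N → p i ≠ p j by
    intro i hi j hj hij
    by_contra h
    obtain h | h := lt_or_gt_of_ne h
    · exact hne i j h hj hij
    · exact hne j i h hi hij.symm
  intro i j hij hj h
  have hk := hp.two_le
  obtain hjk | hkj := lt_or_ge j k
  · exact (hp.re_lt i j hij hjk).ne (congrArg Complex.re h)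
  obtain rfl | hi := i.eq_zero_or_pos
  · have := hp.orient_pos 0 1 j one_pos (by omega) hj hkj
    rw [h, orient_rotate, orient_self_left] at this
    exact this.false
  · have := hp.orient_pos 0 i j hi hij hj hkj
    rw [h, orient_self_right] at this
    exact this.false

variable {u v : ℕ} {I J : Set ℕ}

lemma disjoint_convexHull_of_mem_Icc (hp : IsFlatConvex k N p) (huv : u < v) (hv : v < N)
    (hI : ∀ i ∈ I, u ≤ i ∧ i ≤ v) (hJ : ∀ j ∈ J, j < u ∧ k ≤ v ∨ v < j ∧ j < N ∧ k ≤ j) :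
    Disjoint (convexHull ℝ (p '' I)) (convexHull ℝ (p '' J)) := by
  refine disjoint_convexHull_of_orient (p u) (p v) ?_ ?_
  · rintro _ ⟨i, hi, rfl⟩
    rw [orient_swap_right, neg_nonpos]
    exact hp.orient_nonneg (hI i hi).1 (hI i hi).2 hv
  · rintro _ ⟨j, hj, rfl⟩
    obtain ⟨hju, hkv⟩ | ⟨hvj, hjN, hkj⟩ := hJ j hj
    · rw [orient_rotate]
      exact hp.orient_pos j u v hju huv hv hkv
    · exact hp.orient_pos u v j huv hvj hjN hkj

lemma disjoint_convexHull_of_mem_Ioo (hp : IsFlatConvex k N p) (hkv : k ≤ v) (huv : u < v)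
    (hv : v < N) (hI : ∀ i ∈ I, u < i ∧ i < v) (hJ : ∀ j ∈ J, j ≤ u ∨ v ≤ j ∧ j < N) :
    Disjoint (convexHull ℝ (p '' I)) (convexHull ℝ (p '' J)) := by
  refine (disjoint_convexHull_of_orient (p v) (p u) ?_ ?_).symm
  · rintro _ ⟨j, hj, rfl⟩
    rw [← orient_rotate, orient_swap_right, neg_nonpos]
    obtain hju | ⟨hvj, hjN⟩ := hJ j hj
    · rw [orient_rotate]
      exact hp.orient_nonneg hju huv.le hv
    · exact hp.orient_nonneg huv.le hvj hjN
  · rintro _ ⟨i, hi, rfl⟩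
    rw [← orient_rotate]
    exact hp.orient_pos u i v (hI i hi).1 (hI i hi).2 hv hkv

lemma disjoint_convexHull_of_lt (hp : IsFlatConvex k N p) (hu : u < k) (hI : ∀ i ∈ I, u ≤ i ∧ i < k)
    (hJ : ∀ j ∈ J, j < u) : Disjoint (convexHull ℝ (p '' I)) (convexHull ℝ (p '' J)) := by
  refine disjoint_convexHull_of_orient (p u) (p u + Complex.I) ?_ ?_
  · rintro _ ⟨i, hi, rfl⟩
    rw [orient_add_I, sub_nonpos]
    exact hp.re_le (hI i hi).1 (hI i hi).2
  · rintro _ ⟨j, hj, rfl⟩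
    rw [orient_add_I, sub_pos]
    exact hp.re_lt j u (hJ j hj) hu

lemma disjoint_convexHull (hp : IsFlatConvex k N p) (huv : u ≤ v) (hv : v < N)
    (hI : ∀ i ∈ I, u ≤ i ∧ i ≤ v) (hJ : ∀ j ∈ J, j < u ∨ v < j ∧ j < N ∧ k ≤ j) :
    Disjoint (convexHull ℝ (p '' I)) (convexHull ℝ (p '' J)) := by
  -- The separating line is the chord from `p u` to `p v` if `u < v` and `k ≤ v`, the bottom edge if
  -- `u = 0` and `v < k`, and otherwise a chord cutting off `{u, …, v}`; it is vertical only if all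
  -- points are collinear.
  have hk := hp.two_le
  obtain hvk | hkv := lt_or_ge v k
  · obtain hNk | hkN := le_or_gt N k
    · exact hp.disjoint_convexHull_of_lt (u := u) (by grind) (by grind) (by grind)
    obtain rfl | hu := u.eq_zero_or_pos
    · exact hp.disjoint_convexHull_of_mem_Icc (u := 0) (v := k - 1) (by grind) (by grind)
        (by grind) (by grind)
    · exact hp.disjoint_convexHull_of_mem_Ioo (u := u - 1) (v := k) le_rfl (by grind) hkN
        (by grind) (by grind)
  obtain rfl | huv := huv.eq_or_lt
  · obtain huN | huN := eq_or_ne (u + 1) N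
    · exact (hp.disjoint_convexHull_of_mem_Icc (u := 0) (v := u - 1) (by grind) (by grind)
        (by grind) (by grind)).symm
    · exact hp.disjoint_convexHull_of_mem_Ioo (u := u - 1) (v := u + 1) (by grind) (by grind)
        (by grind) (by grind) (by grind)
  · exact hp.disjoint_convexHull_of_mem_Icc huv hv hI (by grind)

end IsFlatConvex

/-! ### Noncrossing partitions as labellings -/

section BlockMin

variable {α : Type*} [DecidableEq α] {p : ℕ → α} {N : ℕ} {s : Finset α} {π : Finpartition s}

/-- The encoding of a partition of `{p 0, …, p (N - 1)}` used for labellings: `a < N` is sent to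
the least index of a point in the block of `p a`, and indices from `N` on are fixed. -/
noncomputable def blockMin (p : ℕ → α) (N : ℕ) (π : Finpartition s) (a : ℕ) : ℕ :=
  if a < N then sInf {b | π.part (p b) = π.part (p a)} else a

lemma blockMin_of_le {a : ℕ} (ha : N ≤ a) : blockMin p N π a = a :=
  if_neg ha.not_gt

lemma blockMin_le_of_part_eq {a b : ℕ} (ha : a < N) (h : π.part (p b) = π.part (p a)) :
    blockMin p N π a ≤ b := by
  rw [blockMin, if_pos ha]
  exact Nat.sInf_le h

lemma blockMin_le (p : ℕ → α) (N : ℕ) (π : Finpartition s) (a : ℕ) : blockMin p N π a ≤ a := by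
  obtain ha | ha := lt_or_ge a N
  · exact blockMin_le_of_part_eq ha rfl
  · exact (blockMin_of_le ha).le

lemma part_blockMin (p : ℕ → α) (N : ℕ) (π : Finpartition s) (a : ℕ) :
    π.part (p (blockMin p N π a)) = π.part (p a) := by
  obtain ha | ha := lt_or_ge a N
  · rw [blockMin, if_pos ha]
    exact Nat.sInf_mem (s := {b | π.part (p b) = π.part (p a)}) ⟨a, rfl⟩
  · rw [blockMin_of_le ha]

lemma blockMin_eq_blockMin_iff {a b : ℕ} (ha : a < N) (hb : b < N) :
    blockMin p N π a = blockMin p N π b ↔ π.part (p a) = π.part (p b) := by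
  constructor
  · intro h
    rw [← part_blockMin p N π a, h, part_blockMin]
  · intro h
    rw [blockMin, blockMin, if_pos ha, if_pos hb, h]

lemma coe_part_eq_image_blockMin (hp : Set.BijOn p (Set.Iio N) s) {a : ℕ} (ha : a < N) :
    (π.part (p a) : Set α) = p '' {i | i < N ∧ blockMin p N π i = blockMin p N π a} := by
  have hmem : ∀ i < N, p i ∈ π.part (p a) ↔ blockMin p N π i = blockMin p N π a := fun i hi => by
    rw [π.mem_part_iff_part_eq_part (hp.mapsTo hi) (hp.mapsTo ha), blockMin_eq_blockMin_iff hi ha]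
  ext z
  constructor
  · intro hz
    obtain ⟨i, hi, rfl⟩ := hp.surjOn (π.part_subset _ hz)
    exact ⟨i, ⟨hi, (hmem i hi).1 hz⟩, rfl⟩
  · rintro ⟨i, ⟨hi, hia⟩, rfl⟩
    exact (hmem i hi).2 hia

lemma exists_lt_part_eq (hp : Set.BijOn p (Set.Iio N) s) {B : Finset α} (hB : B ∈ π.parts) :
    ∃ a < N, π.part (p a) = B := by
  obtain ⟨x, hx⟩ := π.nonempty_of_mem_parts hB
  obtain ⟨a, ha, rfl⟩ := hp.surjOn (π.le hB hx)
  exact ⟨a, ha, π.part_eq_of_mem hB hx⟩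

lemma blockMin_injective (hp : Set.BijOn p (Set.Iio N) s) :
    Function.Injective (blockMin p N : Finpartition s → ℕ → ℕ) := by
  suffices hsub : ∀ π π' : Finpartition s, blockMin p N π = blockMin p N π' →
      π.parts ⊆ π'.parts from
    fun π π' h => Finpartition.ext ((hsub π π' h).antisymm (hsub π' π h.symm))
  intro π π' h B hB
  obtain ⟨a, ha, rfl⟩ := exists_lt_part_eq hp hB
  have hpart : π.part (p a) = π'.part (p a) := by
    rw [← coe_inj, coe_part_eq_image_blockMin hp ha, coe_part_eq_image_blockMin hp ha, h]
  exact hpart ▸ π'.part_mem.2 (hp.mapsTo ha)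

lemma exists_part_eq_part_iff {β : Type*} (hp : Set.BijOn p (Set.Iio N) s) (f : ℕ → β) :
    ∃ π : Finpartition s, ∀ a < N, ∀ b < N, π.part (p a) = π.part (p b) ↔ f a = f b := by
  classical
  refine ⟨.ofSetSetoid (Setoid.ker (f ∘ Function.invFunOn p (Set.Iio N))) s, fun a ha b hb => ?_⟩
  rw [← Finpartition.mem_part_iff_part_eq_part _ (hp.mapsTo ha) (hp.mapsTo hb),
    Finpartition.mem_part_ofSetSetoid_iff_rel]
  have hleft := hp.injOn.leftInvOn_invFunOn
  simp [Setoid.ker_def, hleft ha, hleft hb, mem_coe.1 (hp.mapsTo ha), mem_coe.1 (hp.mapsTo hb),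
    eq_comm]

lemma exists_blockMin_eq (hp : Set.BijOn p (Set.Iio N) s) {f : ℕ → ℕ} (hle : ∀ a, f a ≤ a)
    (hself : ∀ a, N ≤ a → f a = a) (hidem : ∀ a, f (f a) = f a) :
    ∃ π : Finpartition s, blockMin p N π = f := by
  obtain ⟨π, hπ⟩ := exists_part_eq_part_iff hp f
  refine ⟨π, funext fun a => ?_⟩
  obtain ha | ha := lt_or_ge a N
  · have hmin := blockMin_le p N π a
    refine le_antisymm (blockMin_le_of_part_eq ha ?_) ?_
    · exact (hπ _ ((hle a).trans_lt ha) a ha).2 (hidem a)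
    · rw [← (hπ _ (hmin.trans_lt ha) a ha).1 (part_blockMin p N π a)]
      exact hle _
  · rw [blockMin_of_le ha, hself a ha]

end BlockMin

lemma IsNoncrossing.part_eq_part {P : Finset ℂ} {π : Finpartition P} (hπ : IsNoncrossing π)
    {x y z : ℂ} (hx : x ∈ P) (hy : y ∈ P) (hzx : z ∈ convexHull ℝ (π.part x : Set ℂ))
    (hzy : z ∈ convexHull ℝ (π.part y : Set ℂ)) : π.part x = π.part y := by
  by_contra hne
  exact Set.disjoint_left.1 (hπ (π.part_mem.2 hx) (π.part_mem.2 hy) hne) hzx hzy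

namespace IsFlatConvex

variable {k N : ℕ} {p : ℕ → ℂ} {P : Finset ℂ} {π : Finpartition P}

lemma isLabelling_blockMin (hp : IsFlatConvex k N p) (hP : Set.BijOn p (Set.Iio N) P)
    (hk : k ≤ N) (hπ : IsNoncrossing π) : IsLabelling k N (blockMin p N π) := by
  have hpart := part_blockMin p N π
  have hle := blockMin_le p N π
  have hsegment : ∀ a < N, segment ℝ (p (blockMin p N π a)) (p a) ⊆
      convexHull ℝ (π.part (p a) : Set ℂ) := fun a ha =>
    segment_subset_convexHull (hpart a ▸ π.mem_part (hP.mapsTo ((hle a).trans_lt ha)))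
      (π.mem_part (hP.mapsTo ha))
  have heq : ∀ b < N, ∀ c < N, ∀ z ∈ segment ℝ (p (blockMin p N π b)) (p b),
      z ∈ segment ℝ (p (blockMin p N π c)) (p c) → blockMin p N π b = blockMin p N π c :=
    fun b hb c hc z hzb hzc => (blockMin_eq_blockMin_iff hb hc).2 <|
      hπ.part_eq_part (hP.mapsTo hb) (hP.mapsTo hc) (hsegment b hb hzb) (hsegment c hc hzc)
  refine ⟨hle, fun a => blockMin_of_le, fun b c hcb hbc => ?_, fun b c hc hcb hbc => ?_⟩
  · obtain hcN | hcN := le_or_gt N c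
    · rw [blockMin_of_le hcN] at hcb ⊢
      rw [hbc.antisymm hcb, blockMin_of_le hcN]
    have hbN := hbc.trans_lt hcN
    obtain hcb | hcb := hcb.eq_or_lt
    · exact ((blockMin_eq_blockMin_iff hbN hcN).2 (hcb ▸ hpart c)).ge
    obtain rfl | hbc := hbc.eq_or_lt
    · rfl
    by_contra! hlt
    obtain ⟨z, hzb, hzc⟩ := hp.exists_mem_segment_inter hlt hcb hbc hcN
    exact hlt.ne (heq b hbN c hcN z hzb hzc)
  · exact (heq b (by omega) c (by omega) (p b) (right_mem_segment ..)
      (hp.mem_segment hcb hbc hc)).le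

lemma disjoint_convexHull_image_fiber (hp : IsFlatConvex k N p) {f : ℕ → ℕ}
    (hf : IsLabelling k N f) {a b : ℕ} (hb : b < N) (hab : f a < f b) :
    Disjoint (convexHull ℝ (p '' {i | i < N ∧ f i = f b}))
      (convexHull ℝ (p '' {i | i < N ∧ f i = f a})) := by
  obtain ⟨v, hv, hmax⟩ := exists_max_image {i ∈ range N | f i = f b} id ⟨b, by simp [hb]⟩
  simp only [mem_filter, mem_range, id] at hv hmax
  refine hp.disjoint_convexHull (hv.2 ▸ hf.le_self v) hv.1 (fun i hi => ?_) fun j hj => ?_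
  · exact ⟨hi.2 ▸ hf.le_self i, hmax i hi⟩
  · obtain ⟨hjN, hja⟩ := hj
    have hnested := hf.nested j v
    have hinterval := hf.interval v j
    have := hf.le_self v
    omega

lemma isNoncrossing_of_isLabelling_blockMin (hp : IsFlatConvex k N p)
    (hP : Set.BijOn p (Set.Iio N) P) (hf : IsLabelling k N (blockMin p N π)) :
    IsNoncrossing π := by
  intro B₁ hB₁ B₂ hB₂ hne
  obtain ⟨a, ha, rfl⟩ := exists_lt_part_eq hP hB₁
  obtain ⟨b, hb, rfl⟩ := exists_lt_part_eq hP hB₂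
  rw [coe_part_eq_image_blockMin hP ha, coe_part_eq_image_blockMin hP hb]
  obtain h | h := lt_or_gt_of_ne (mt (blockMin_eq_blockMin_iff ha hb).1 hne)
  · exact (hp.disjoint_convexHull_image_fiber hf hb h).symm
  · exact hp.disjoint_convexHull_image_fiber hf ha h

lemma card_NC (hp : IsFlatConvex k N p) (hP : Set.BijOn p (Set.Iio N) P) (hk : k ≤ N) :
    Nat.card (NC P) = #(labellings k N) := by
  rw [← Nat.card_eq_finsetCard]
  refine Nat.card_eq_of_bijective (fun π : NC P => (⟨blockMin p N π.1,
    mem_labellings.2 (hp.isLabelling_blockMin hP hk π.2)⟩ : labellings k N)) ⟨?_, ?_⟩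
  · exact fun π π' h => Subtype.ext (blockMin_injective hP (congrArg Subtype.val h))
  · rintro ⟨f, hf⟩
    have hf := mem_labellings.1 hf
    obtain ⟨π, rfl⟩ := exists_blockMin_eq hP hf.le_self hf.eq_self hf.apply_apply
    exact ⟨⟨π, hp.isNoncrossing_of_isLabelling_blockMin hP hf⟩, rfl⟩

end IsFlatConvex

/-! ### The semicircular configuration -/

section Semicircle

lemma orient_exp_mul_I (α β γ : ℝ) :
    orient (Complex.exp (α * Complex.I)) (Complex.exp (β * Complex.I))
      (Complex.exp (γ * Complex.I)) =
        4 * Real.sin ((β - α) / 2) * Real.sin ((γ - β) / 2) * Real.sin ((γ - α) / 2) := by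
  have hsum : orient (Complex.exp (α * Complex.I)) (Complex.exp (β * Complex.I))
      (Complex.exp (γ * Complex.I)) =
        Real.sin (β - α) + Real.sin (γ - β) - Real.sin (γ - α) := by
    simp only [orient, Complex.exp_ofReal_mul_I_re, Complex.exp_ofReal_mul_I_im, Real.sin_sub]
    ring
  obtain ⟨s, rfl⟩ : ∃ s, β = α + 2 * s := ⟨(β - α) / 2, by ring⟩
  obtain ⟨t, rfl⟩ : ∃ t, γ = α + 2 * s + 2 * t := ⟨(γ - (α + 2 * s)) / 2, by ring⟩
  rw [hsum]
  ring_nf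
  rw [mul_comm s, mul_comm t, Real.sin_add (2 * s), Real.sin_two_mul, Real.sin_two_mul,
    Real.cos_two_mul', Real.cos_two_mul', Real.sin_add]
  have hs := Real.sin_sq_add_cos_sq s
  have ht := Real.sin_sq_add_cos_sq t
  linear_combination (-2 * Real.sin t * Real.cos t) * hs + (-2 * Real.sin s * Real.cos s) * ht

lemma orient_exp_mul_I_pos {α β γ : ℝ} (hαβ : α < β) (hβγ : β < γ) (hγα : γ < α + 2 * Real.pi) :
    0 < orient (Complex.exp (α * Complex.I)) (Complex.exp (β * Complex.I))
      (Complex.exp (γ * Complex.I)) := by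
  rw [orient_exp_mul_I]
  have hsin : ∀ x, 0 < x → x < 2 * Real.pi → 0 < Real.sin (x / 2) := fun x hx hxpi =>
    Real.sin_pos_of_pos_of_lt_pi (by linarith) (by linarith)
  have hβα := hsin (β - α) (by linarith) (by linarith)
  have hγβ := hsin (γ - β) (by linarith) (by linarith)
  have hγα := hsin (γ - α) (by linarith) (by linarith)
  positivity

/-- The points of `Sconfig m n` in counterclockwise order, starting at `-1`. Note that
`Sx m (m + 1) = 1 = Sy n 0`. -/
noncomputable def Spoint (m n i : ℕ) : ℂ := if i < m + 2 then Sx m i else Sy n (i - (m + 1))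

variable {m n : ℕ}

lemma Sx_eq_ofReal (m k : ℕ) : Sx m k = ((-1 + 2 * k / (m + 1) : ℝ) : ℂ) := by
  simp [Sx]

lemma Sx_im (m k : ℕ) : (Sx m k).im = 0 := by
  rw [Sx_eq_ofReal, Complex.ofReal_im]

lemma Sx_re_strictMono (m : ℕ) : StrictMono fun k => (Sx m k).re := by
  intro i j hij
  simp only [Sx_eq_ofReal, Complex.ofReal_re]
  gcongr

lemma Sx_re_mem_Icc {k : ℕ} (hk : k ≤ m + 1) : (Sx m k).re ∈ Set.Icc (-1 : ℝ) 1 := by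
  have hzero : (Sx m 0).re = -1 := by simp [Sx_eq_ofReal]
  have hlast : (Sx m (m + 1)).re = 1 := by
    rw [Sx_eq_ofReal, Complex.ofReal_re]
    push_cast
    field_simp
    norm_num
  rw [← hzero, ← hlast]
  exact ⟨(Sx_re_strictMono m).monotone k.zero_le, (Sx_re_strictMono m).monotone hk⟩

lemma Sy_zero (n : ℕ) : Sy n 0 = 1 := by
  simp [Sy]

lemma Sy_succ_self (n : ℕ) : Sy n (n + 1) = -1 := by
  rw [Sy, ← Complex.exp_pi_mul_I]
  have : (n : ℂ) + 1 ≠ 0 := n.cast_add_one_ne_zero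
  push_cast
  field_simp

lemma orient_Sy_pos {i j l : ℕ} (hij : i < j) (hjl : j < l) (hl : l ≤ n + 1) :
    0 < orient (Sy n i) (Sy n j) (Sy n l) := by
  have hangle : ∀ j, Sy n j = Complex.exp ((Real.pi * j / (n + 1) : ℝ) * Complex.I) := fun j => by
    simp [Sy]
  have hlast : Real.pi * l / (n + 1) ≤ Real.pi := by
    rw [mul_div_assoc]
    exact mul_le_of_le_one_right Real.pi_pos.le ((div_le_one (by positivity)).2 (mod_cast hl))
  have := Real.pi_pos
  rw [hangle, hangle, hangle]
  refine orient_exp_mul_I_pos (by gcongr) (by gcongr) ?_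
  have : 0 ≤ Real.pi * i / (n + 1) := by positivity
  linarith

lemma orient_Sx_Sy_Sy_pos {k j l : ℕ} (hk : k ≤ m + 1) (hj : 0 < j) (hjl : j < l) (hl : l ≤ n) :
    0 < orient (Sx m k) (Sy n j) (Sy n l) := by
  have hright := orient_Sy_pos hj hjl (hl.trans n.le_succ)
  have hleft := orient_Sy_pos hjl (Nat.lt_succ_of_le hl) le_rfl
  rw [Sy_zero] at hright
  rw [Sy_succ_self, orient_rotate (-1)] at hleft
  have hcomb : orient (Sx m k) (Sy n j) (Sy n l) =
      (1 + (Sx m k).re) / 2 * orient 1 (Sy n j) (Sy n l) +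
        (1 - (Sx m k).re) / 2 * orient (-1) (Sy n j) (Sy n l) := by
    simp only [orient, Sx_im, Complex.one_re, Complex.one_im, Complex.neg_re, Complex.neg_im]
    ring
  obtain ⟨hlower, hupper⟩ := Sx_re_mem_Icc hk
  have ha : 0 ≤ (1 + (Sx m k).re) / 2 := by linarith
  have hb : 0 ≤ (1 - (Sx m k).re) / 2 := by linarith
  rw [hcomb]
  exact convex_Ioi (0 : ℝ) hright hleft ha hb (by ring)

lemma Sy_im_pos {j : ℕ} (hj : 0 < j) (hjn : j ≤ n) : 0 < (Sy n j).im := by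
  have := orient_Sy_pos hj (Nat.lt_succ_of_le hjn) le_rfl
  rw [Sy_zero, Sy_succ_self, orient, Complex.one_re, Complex.one_im, Complex.neg_re,
    Complex.neg_im, Complex.one_re, Complex.one_im] at this
  linarith

lemma isFlatConvex_Spoint (m n : ℕ) : IsFlatConvex (m + 2) (m + 2 + n) (Spoint m n) where
  two_le := by omega
  im_eq_zero i hi := by rw [Spoint, if_pos hi, Sx_im]
  re_lt i j hij hj := by
    rw [Spoint, if_pos (hij.trans hj), Spoint, if_pos hj]
    exact Sx_re_strictMono m hij
  orient_pos i j l hij hjl hl hkl := by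
    rw [Spoint, Spoint, Spoint, if_neg (not_lt.2 hkl)]
    split_ifs with hi hj hj
    · rw [orient, Sx_im, Sx_im]
      have := mul_pos (sub_pos.2 (Sx_re_strictMono m hij))
        (Sy_im_pos (n := n) (j := l - (m + 1)) (by omega) (by omega))
      simpa using this
    · exact orient_Sx_Sy_Sy_pos (by omega) (by omega) (by omega) (by omega)
    · omega
    · exact orient_Sy_pos (by omega) (by omega) (by omega)

lemma bijOn_Spoint (m n : ℕ) :
    Set.BijOn (Spoint m n) (Set.Iio (m + 2 + n)) (Sconfig m n : Set ℂ) := by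
  have himage : Spoint m n '' Set.Iio (m + 2 + n) = Sconfig m n := by
    ext z
    simp only [Set.mem_image, Set.mem_Iio, Spoint, Sconfig, coe_union, coe_image, Set.mem_union]
    constructor
    · rintro ⟨i, hi, rfl⟩
      split_ifs with him
      · exact .inl ⟨i, by simpa using him, rfl⟩
      · exact .inr ⟨i - (m + 1), by simp; omega, rfl⟩
    · rintro (⟨k, hk, rfl⟩ | ⟨j, hj, rfl⟩)
      · have hk : k < m + 2 := by simpa using hk
        exact ⟨k, by omega, if_pos hk⟩
      · have hj : 1 ≤ j ∧ j ≤ n := by simpa using hj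
        exact ⟨j + (m + 1), by omega, by rw [if_neg (by omega), Nat.add_sub_cancel]⟩
  rw [← himage]
  exact (isFlatConvex_Spoint m n).injOn.bijOn_image

end Semicircle

lemma Sseries_eq_flatten :
    Sseries = flatten (PowerSeries.mk fun m => labellingSeries (m + 2)) := by
  ext d
  rw [coeff_flatten, PowerSeries.coeff_mk, coeff_labellingSeries, MvPowerSeries.coeff_apply,
    Sseries, (isFlatConvex_Spoint _ _).card_NC (bijOn_Spoint _ _) (Nat.le_add_right _ _)]

/-- `Y² ⬝ (1 - X(1 + C(Y))) ⬝ S(X,Y) = C(Y) - 1 - Y` in `ℤ⟦X,Y⟧`. -/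
theorem nc_S_generating_function :
    MvPowerSeries.X 1 ^ 2 * (1 - MvPowerSeries.X 0 * (1 + Cseries)) * Sseries =
      Cseries - 1 - MvPowerSeries.X 1 := by
  have key : PowerSeries.C PowerSeries.X ^ 2 *
      (1 - PowerSeries.X * (1 + PowerSeries.C intCatalanSeries)) *
        (PowerSeries.mk fun m => labellingSeries (m + 2)) =
      PowerSeries.C intCatalanSeries - 1 - PowerSeries.C PowerSeries.X := by
    rw [mul_assoc, one_sub_X_mul_mul_mk_labellingSeries, ← map_pow, ← map_mul,
      X_sq_mul_labellingSeries_two, map_sub, map_sub, map_one]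
  simpa [flatten_X, flatten_C_X, flatten_C_intCatalanSeries, ← Sseries_eq_flatten] using
    congrArg flatten key
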